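/- arXiv:2401.02520 — 6 statements merged into one kernel-verified Lean document; each statement's English description precedes it below -/
import Mathlib

section
/- Let p, r̄, s̄ be positive integers and μ̄ > 0. Suppose c̃ > 0 is a constant with the separation property: for all matrices P' = UΣVᵀ and Q' = LΛRᵀ with U, V, L, R ∈ O_{p,r̄} all μ̄-incoherent and Σ, Λ diagonal with nonnegative entries, one has ‖P'−Q'‖_max² ≤ (c̃ μ̄ r̄⁴ / p)·‖P'−Q'‖_F². Assume s̄ ≤ p/(8 c̃ μ̄ r̄⁴), and let Y = L* + S* + W in ℝ^{p×p}, where L* = U*Σ*V*ᵀ with U*, V* ∈ O_{p,r̄} μ̄-incoherent and Σ* diagonal with nonnegative entries, and ‖S*‖₀ ≤ s̄. Suppose (L̂, Ŝ) is feasible, i.e. L̂ = ÛΣ̂V̂ᵀ with Û, V̂ ∈ O_{p,r̄} μ̄-incoherent and Σ̂ diagonal with nonnegative entries, ‖Ŝ‖₀ ≤ s̄, and optimal in the sense that ‖Y − L̂ − Ŝ‖_F ≤ ‖Y − L* − S*‖_F. Then ‖L̂ − L*‖_F² + ‖Ŝ − S*‖_F² ≤ 128·( r̄·‖W‖² + s̄·‖W‖_max²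 ), where ‖W‖ is the spectral norm of W. -/
open Matrix
open scoped BigOperators RealInnerProductSpace

noncomputable def frobNorm {m n : Type*} [Fintype m] [Fintype n] (M : Matrix m n ℝ) : ℝ :=
  Real.sqrt (∑ i, ∑ j, (M i j) ^ 2)

noncomputable def frobInner {m n : Type*} [Fintype m] [Fintype n] (A B : Matrix m n ℝ) : ℝ :=
  ∑ i, ∑ j, A i j * B i j

noncomputable def maxNorm {m n : Type*} [Fintype m] [Fintype n] (M : Matrix m n ℝ) : ℝ :=
  ⨆ i, ⨆ j, |M i j|

noncomputable def l0Norm {m n : Type*} (M : Matrix m n ℝ) : ℕ :=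
  Set.ncard {ij : m × n | M ij.1 ij.2 ≠ 0}

noncomputable def specNorm {p q : ℕ} (M : Matrix (Fin p) (Fin q) ℝ) : ℝ :=
  ‖LinearMap.toContinuousLinearMap (Matrix.toEuclideanLin M)‖

def Incoherent {p r : ℕ} (μ : ℝ) (U : Matrix (Fin p) (Fin r) ℝ) : Prop :=
  ∀ i, Real.sqrt (∑ j, (U i j) ^ 2) ≤ Real.sqrt (μ * r / p)

def SepProp (p r : ℕ) (μ c : ℝ) : Prop :=
  ∀ (U V L R : Matrix (Fin p) (Fin r) ℝ) (S Lam : Matrix (Fin r) (Fin r) ℝ),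
    Uᵀ * U = 1 → Vᵀ * V = 1 → Lᵀ * L = 1 → Rᵀ * R = 1 →
    Incoherent μ U → Incoherent μ V → Incoherent μ L → Incoherent μ R →
    S.IsDiag → (∀ i, 0 ≤ S i i) → Lam.IsDiag → (∀ i, 0 ≤ Lam i i) →
    maxNorm (U * S * Vᵀ - L * Lam * Rᵀ) ^ 2 ≤
      (c * μ * (r : ℝ) ^ 4 / p) * frobNorm (U * S * Vᵀ - L * Lam * Rᵀ) ^ 2

noncomputable def l1Norm {m n : Type*} [Fintype m] [Fintype n] (M : Matrix m n ℝ) : ℝ :=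
  ∑ i, ∑ j, |M i j|

noncomputable def nuclearNorm {p q : ℕ} (M : Matrix (Fin p) (Fin q) ℝ) : ℝ :=
  sSup {x : ℝ | ∃ X : Matrix (Fin p) (Fin q) ℝ, specNorm X ≤ 1 ∧ x = frobInner M X}

noncomputable def Phi {p : ℕ} (lam : ℝ) (Δ : Matrix (Fin p) (Fin p) ℝ) : ℝ :=
  sInf {x : ℝ | ∃ L S : Matrix (Fin p) (Fin p) ℝ, L + S = Δ ∧ x = nuclearNorm L + lam * l1Norm S}

lemma frobNorm_nonneg {m n : Type*} [Fintype m] [Fintype n] (M : Matrix m n ℝ) :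
    0 ≤ frobNorm M :=
  Real.sqrt_nonneg _

lemma frobNorm_sq {m n : Type*} [Fintype m] [Fintype n] (M : Matrix m n ℝ) :
    frobNorm M ^ 2 = ∑ i, ∑ j, (M i j) ^ 2 :=
  Real.sq_sqrt (by positivity)

lemma frobNorm_sq_eq_trace {m n : Type*} [Fintype m] [Fintype n] (M : Matrix m n ℝ) :
    frobNorm M ^ 2 = (M * Mᵀ).trace := by
  rw [frobNorm_sq]
  simp [Matrix.trace, Matrix.mul_apply, pow_two]

lemma frobNorm_transpose {m n : Type*} [Fintype m] [Fintype n] (M : Matrix m n ℝ) :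
    frobNorm Mᵀ = frobNorm M := by
  unfold frobNorm
  rw [Finset.sum_comm]
  rfl

lemma frobInner_add_right {m n : Type*} [Fintype m] [Fintype n] (A B C : Matrix m n ℝ) :
    frobInner A (B + C) = frobInner A B + frobInner A C := by
  simp [frobInner, mul_add, Finset.sum_add_distrib]

lemma frobNorm_add_sq {m n : Type*} [Fintype m] [Fintype n] (A B : Matrix m n ℝ) :
    frobNorm (A + B) ^ 2 = frobNorm A ^ 2 + 2 * frobInner A B + frobNorm B ^ 2 := by
  simp only [frobNorm_sq, frobInner, Finset.mul_sum, ← Finset.sum_add_distrib, Matrix.add_apply]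
  exact Finset.sum_congr rfl fun i _ => Finset.sum_congr rfl fun j _ => by ring

lemma frobNorm_sub_sq {m n : Type*} [Fintype m] [Fintype n] (A B : Matrix m n ℝ) :
    frobNorm (A - B) ^ 2 = frobNorm A ^ 2 - 2 * frobInner A B + frobNorm B ^ 2 := by
  simp only [frobNorm_sq, frobInner, Finset.mul_sum, ← Finset.sum_add_distrib,
    ← Finset.sum_sub_distrib, Matrix.sub_apply]
  exact Finset.sum_congr rfl fun i _ => Finset.sum_congr rfl fun j _ => by ring

lemma frobNorm_sq_of_orthonormal {p r : ℕ} {V : Matrix (Fin p) (Fin r) ℝ} (hV : Vᵀ * V = 1) :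
    frobNorm V ^ 2 = r := by
  rw [frobNorm_sq_eq_trace, Matrix.trace_mul_comm, hV]
  simp

/-- Pythagoras for the orthogonal projection of the rows of `A` onto the column span of `V`. -/
lemma frobNorm_sq_eq_projection_add {m n k : Type*} [Fintype m] [Fintype n] [Fintype k]
    [DecidableEq k] (A : Matrix m n ℝ) {V : Matrix n k ℝ} (hV : Vᵀ * V = 1) :
    frobNorm A ^ 2 = frobNorm (A * V) ^ 2 + frobNorm (A - A * V * Vᵀ) ^ 2 := by
  have h : (A - A * V * Vᵀ) * (A - A * V * Vᵀ)ᵀ = A * Aᵀ - (A * V) * (A * V)ᵀ := by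
    have h' : Vᵀ * (V * (Vᵀ * Aᵀ)) = Vᵀ * Aᵀ := by rw [← Matrix.mul_assoc, hV, Matrix.one_mul]
    simp only [Matrix.transpose_sub, Matrix.transpose_mul, Matrix.transpose_transpose,
      Matrix.mul_sub, Matrix.sub_mul, Matrix.mul_assoc, h']
    abel
  rw [frobNorm_sq_eq_trace (A - _), h, Matrix.trace_sub, frobNorm_sq_eq_trace,
    frobNorm_sq_eq_trace]
  ring

lemma frobNorm_mul_le_of_orthonormal {m n k : Type*} [Fintype m] [Fintype n] [Fintype k]
    [DecidableEq k] (A : Matrix m n ℝ) {V : Matrix n k ℝ} (hV : Vᵀ * V = 1) :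
    frobNorm (A * V) ≤ frobNorm A :=
  (sq_le_sq₀ (frobNorm_nonneg _) (frobNorm_nonneg _)).mp
    (by nlinarith [frobNorm_sq_eq_projection_add A hV])

lemma frobNorm_sub_projection_le {m n k : Type*} [Fintype m] [Fintype n] [Fintype k]
    [DecidableEq k] (A : Matrix m n ℝ) {V : Matrix n k ℝ} (hV : Vᵀ * V = 1) :
    frobNorm (A - A * V * Vᵀ) ≤ frobNorm A :=
  (sq_le_sq₀ (frobNorm_nonneg _) (frobNorm_nonneg _)).mp
    (by nlinarith [frobNorm_sq_eq_projection_add A hV])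

lemma specNorm_nonneg {p q : ℕ} (M : Matrix (Fin p) (Fin q) ℝ) : 0 ≤ specNorm M :=
  norm_nonneg _

lemma sum_mul_mulVec_le_specNorm {p q : ℕ} (W : Matrix (Fin p) (Fin q) ℝ) (a : Fin p → ℝ)
    (b : Fin q → ℝ) :
    ∑ i, a i * (W *ᵥ b) i ≤ specNorm W * (√(∑ i, a i ^ 2) * √(∑ j, b j ^ 2)) := by
  have h1 := Real.sum_mul_le_sqrt_mul_sqrt Finset.univ a (W *ᵥ b)
  have h2 : √(∑ i, (W *ᵥ b) i ^ 2) ≤ specNorm W * √(∑ j, b j ^ 2) := by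
    have h := (LinearMap.toContinuousLinearMap (Matrix.toEuclideanLin W)).le_opNorm
      (WithLp.toLp 2 b)
    simpa [EuclideanSpace.norm_eq, specNorm] using h
  have h3 := mul_le_mul_of_nonneg_left h2 (Real.sqrt_nonneg (∑ i, a i ^ 2))
  linarith

/-- Duality between the spectral norm and factorizations with bounded Frobenius norms. -/
lemma frobInner_mul_transpose_le {p q r : ℕ} (W : Matrix (Fin p) (Fin q) ℝ)
    (A : Matrix (Fin p) (Fin r) ℝ) (B : Matrix (Fin q) (Fin r) ℝ) :
    frobInner W (A * Bᵀ) ≤ specNorm W * (frobNorm A * frobNorm B) := by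
  have hexp : frobInner W (A * Bᵀ) = ∑ k, ∑ i, A i k * (W *ᵥ fun j => B j k) i := by
    simp only [frobInner, Matrix.mul_apply, Matrix.mulVec, dotProduct, Finset.mul_sum,
      Matrix.transpose_apply]
    conv_rhs => rw [Finset.sum_comm]
    refine Finset.sum_congr rfl fun i _ => ?_
    rw [Finset.sum_comm]
    exact Finset.sum_congr rfl fun k _ => Finset.sum_congr rfl fun j _ => by ring
  have hcs := Real.sum_mul_le_sqrt_mul_sqrt Finset.univ (fun k => √(∑ i, A i k ^ 2))
    (fun k => √(∑ j, B j k ^ 2))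
  have hA : ∑ k, √(∑ i, A i k ^ 2) ^ 2 = ∑ i, ∑ k, A i k ^ 2 := by
    rw [Finset.sum_comm]
    exact Finset.sum_congr rfl fun k _ => Real.sq_sqrt (by positivity)
  have hB : ∑ k, √(∑ i, B i k ^ 2) ^ 2 = ∑ i, ∑ k, B i k ^ 2 := by
    rw [Finset.sum_comm]
    exact Finset.sum_congr rfl fun k _ => Real.sq_sqrt (by positivity)
  rw [hA, hB] at hcs
  calc frobInner W (A * Bᵀ)
      ≤ ∑ k, specNorm W * (√(∑ i, A i k ^ 2) * √(∑ j, B j k ^ 2)) := by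
        rw [hexp]
        exact Finset.sum_le_sum fun k _ => sum_mul_mulVec_le_specNorm W _ _
    _ = specNorm W * ∑ k, √(∑ i, A i k ^ 2) * √(∑ j, B j k ^ 2) := by rw [Finset.mul_sum]
    _ ≤ _ := mul_le_mul_of_nonneg_left hcs (specNorm_nonneg W)

lemma frobInner_sub_le_specNorm {p r : ℕ} (W : Matrix (Fin p) (Fin p) ℝ)
    {U V U' V' : Matrix (Fin p) (Fin r) ℝ} (S S' : Matrix (Fin r) (Fin r) ℝ)
    (hV : Vᵀ * V = 1) (hU' : U'ᵀ * U' = 1) :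
    frobInner W (U' * S' * V'ᵀ - U * S * Vᵀ) ≤
      2 * √r * specNorm W * frobNorm (U' * S' * V'ᵀ - U * S * Vᵀ) := by
  set D := U' * S' * V'ᵀ - U * S * Vᵀ with hD
  have hres : D - D * V * Vᵀ = U' * (U'ᵀ * (D - D * V * Vᵀ)) := by
    have hfac : D - D * V * Vᵀ = U' * (S' * V'ᵀ - S' * V'ᵀ * V * Vᵀ) := by
      have h' : Vᵀ * (V * Vᵀ) = Vᵀ := by rw [← Matrix.mul_assoc, hV, Matrix.one_mul]
      simp only [hD, Matrix.mul_sub, Matrix.sub_mul, Matrix.mul_assoc, h']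
      abel
    rw [hfac, ← Matrix.mul_assoc U'ᵀ, hU', Matrix.one_mul]
  have hsplit : D = (D * V) * Vᵀ + U' * ((D - D * V * Vᵀ)ᵀ * U')ᵀ := by
    rw [Matrix.transpose_mul, Matrix.transpose_transpose, ← hres]
    abel
  have hnorm {X : Matrix (Fin p) (Fin r) ℝ} (hX : Xᵀ * X = 1) : frobNorm X = √r := by
    rw [← frobNorm_sq_of_orthonormal hX, Real.sqrt_sq (frobNorm_nonneg _)]
  have h1 := frobInner_mul_transpose_le W (D * V) V
  have h2 := frobInner_mul_transpose_le W U' ((D - D * V * Vᵀ)ᵀ * U')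
  have h3 := frobNorm_mul_le_of_orthonormal D hV
  have h4 : frobNorm ((D - D * V * Vᵀ)ᵀ * U') ≤ frobNorm D :=
    (frobNorm_mul_le_of_orthonormal _ hU').trans
      ((frobNorm_transpose _).trans_le (frobNorm_sub_projection_le D hV))
  rw [hnorm hV] at h1
  rw [hnorm hU'] at h2
  have hw : 0 ≤ specNorm W * √r := mul_nonneg (specNorm_nonneg W) (Real.sqrt_nonneg _)
  have h5 := mul_le_mul_of_nonneg_left h3 hw
  have h6 := mul_le_mul_of_nonneg_left h4 hw
  have h7 : frobInner W D = frobInner W ((D * V) * Vᵀ) +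
      frobInner W (U' * ((D - D * V * Vᵀ)ᵀ * U')ᵀ) := by
    rw [← frobInner_add_right, ← hsplit]
  linarith

lemma abs_le_maxNorm {m n : Type*} [Fintype m] [Fintype n] (M : Matrix m n ℝ) (i : m) (j : n) :
    |M i j| ≤ maxNorm M :=
  (le_ciSup (f := fun j => |M i j|) (Set.finite_range _).bddAbove j).trans
    (le_ciSup (f := fun i => ⨆ j, |M i j|) (Set.finite_range _).bddAbove i)

lemma maxNorm_nonneg {m n : Type*} [Fintype m] [Fintype n] (M : Matrix m n ℝ) :
    0 ≤ maxNorm M :=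
  Real.iSup_nonneg fun _ => Real.iSup_nonneg fun _ => abs_nonneg _

lemma l0Norm_sub_le {m n : Type*} [Fintype m] [Fintype n] (A B : Matrix m n ℝ) :
    l0Norm (A - B) ≤ l0Norm A + l0Norm B := by
  refine (Set.ncard_le_ncard ?_ (Set.toFinite _)).trans (Set.ncard_union_le _ _)
  intro x hx
  by_contra h
  simp only [Set.mem_union, Set.mem_ofPred_eq, not_or, not_not] at h
  simp [h.1, h.2] at hx

lemma sq_frobInner_le_of_l0Norm_le {m n : Type*} [Fintype m] [Fintype n] (M E : Matrix m n ℝ)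
    {k : ℕ} (hE : l0Norm E ≤ k) :
    frobInner M E ^ 2 ≤ k * maxNorm M ^ 2 * frobNorm E ^ 2 := by
  classical
  let T : Finset (m × n) := Finset.univ.filter fun x => E x.1 x.2 ≠ 0
  have hcard : (T.card : ℝ) ≤ k := by
    have h : l0Norm E = T.card := by
      rw [l0Norm, ← Set.ncard_coe_finset]
      simp [T]
    exact_mod_cast h ▸ hE
  have hinner : frobInner M E = ∑ x ∈ T, M x.1 x.2 * E x.1 x.2 := by
    rw [frobInner, ← Fintype.sum_prod_type' (f := fun i j => M i j * E i j), Finset.sum_filter]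
    exact Finset.sum_congr rfl fun x _ => by by_cases h : E x.1 x.2 = 0 <;> simp [h]
  have hEsum : ∑ x ∈ T, E x.1 x.2 ^ 2 ≤ frobNorm E ^ 2 := by
    rw [frobNorm_sq, ← Fintype.sum_prod_type' (f := fun i j => E i j ^ 2)]
    exact Finset.sum_le_sum_of_subset_of_nonneg (Finset.subset_univ _)
      fun _ _ _ => sq_nonneg _
  have hMsum : ∑ x ∈ T, M x.1 x.2 ^ 2 ≤ k * maxNorm M ^ 2 := by
    calc ∑ x ∈ T, M x.1 x.2 ^ 2 ≤ ∑ _x ∈ T, maxNorm M ^ 2 :=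
          Finset.sum_le_sum fun x _ => by
            rw [← sq_abs]
            exact pow_le_pow_left₀ (abs_nonneg _) (abs_le_maxNorm M _ _) 2
      _ = T.card * maxNorm M ^ 2 := by simp
      _ ≤ _ := mul_le_mul_of_nonneg_right hcard (sq_nonneg _)
  rw [hinner]
  exact (Finset.sum_mul_sq_le_sq_mul_sq _ _ _).trans
    (mul_le_mul hMsum hEsum (Finset.sum_nonneg fun _ _ => sq_nonneg _) (by positivity))

/-- deterministic error bound for the identity observation model
(low-rank-plus-sparse matrix denoising). -/
theorem stmt1
    (p rbar sbar : ℕ) (hp : 0 < p) (hrbar : 0 < rbar) (hsbar : 0 < sbar)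
    (μbar c : ℝ) (hμbar : 0 < μbar) (hc : 0 < c) (hsep : SepProp p rbar μbar c)
    (hsparse : (sbar : ℝ) ≤ (p : ℝ) / (8 * c * μbar * (rbar : ℝ) ^ 4))
    (Y W Lstar Sstar Lhat Shat : Matrix (Fin p) (Fin p) ℝ)
    (Ustar Vstar Uhat Vhat : Matrix (Fin p) (Fin rbar) ℝ)
    (Sigstar Sighat : Matrix (Fin rbar) (Fin rbar) ℝ)
    (hY : Y = Lstar + Sstar + W)
    (hUo : Ustarᵀ * Ustar = 1) (hVo : Vstarᵀ * Vstar = 1)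
    (hUi : Incoherent μbar Ustar) (hVi : Incoherent μbar Vstar)
    (hSigd : Sigstar.IsDiag) (hSignn : ∀ i, 0 ≤ Sigstar i i)
    (hLstar : Lstar = Ustar * Sigstar * Vstarᵀ)
    (hSstar : l0Norm Sstar ≤ sbar)
    (hUho : Uhatᵀ * Uhat = 1) (hVho : Vhatᵀ * Vhat = 1)
    (hUhi : Incoherent μbar Uhat) (hVhi : Incoherent μbar Vhat)
    (hSighd : Sighat.IsDiag) (hSighnn : ∀ i, 0 ≤ Sighat i i)
    (hLhat : Lhat = Uhat * Sighat * Vhatᵀ)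
    (hShat : l0Norm Shat ≤ sbar)
    (hopt : frobNorm (Y - Lhat - Shat) ≤ frobNorm (Y - Lstar - Sstar)) :
    frobNorm (Lhat - Lstar) ^ 2 + frobNorm (Shat - Sstar) ^ 2 ≤
      128 * ((rbar : ℝ) * specNorm W ^ 2 + (sbar : ℝ) * maxNorm W ^ 2) := by
  set D := Lhat - Lstar with hD
  set E := Shat - Sstar with hE
  have hres : Y - Lhat - Shat = W - (D + E) := by
    rw [hY, hD, hE]
    abel
  have hnoise : Y - Lstar - Sstar = W := by
    rw [hY]
    abel
  have hbasic : frobNorm (D + E) ^ 2 ≤ 2 * frobInner W (D + E) := by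
    rw [hres, hnoise] at hopt
    have h := pow_le_pow_left₀ (frobNorm_nonneg _) hopt 2
    rw [frobNorm_sub_sq] at h
    linarith
  have hEl0 : l0Norm E ≤ 2 * sbar := (l0Norm_sub_le _ _).trans (by omega)
  have hmax : maxNorm D ^ 2 ≤ (c * μbar * (rbar : ℝ) ^ 4 / p) * frobNorm D ^ 2 := by
    rw [hD, hLhat, hLstar]
    exact hsep _ _ _ _ _ _ hUho hVho hUo hVo hUhi hVhi hUi hVi hSighd hSighnn hSigd hSignn
  have hp' : (0 : ℝ) < p := by exact_mod_cast hp
  have hr' : (0 : ℝ) < rbar := by exact_mod_cast hrbar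
  have hconst : 2 * sbar * (c * μbar * (rbar : ℝ) ^ 4 / p) ≤ 1 / 4 := by
    rw [le_div_iff₀ (by positivity)] at hsparse
    rw [← mul_div_assoc, div_le_iff₀ hp']
    linarith
  have hcross : |2 * frobInner D E| ≤ frobNorm D * frobNorm E := by
    refine abs_le_of_sq_le_sq ?_ (mul_nonneg (frobNorm_nonneg _) (frobNorm_nonneg _))
    have h := sq_frobInner_le_of_l0Norm_le D E hEl0
    push_cast at h
    have h1 : 2 * sbar * maxNorm D ^ 2 ≤ 1 / 4 * frobNorm D ^ 2 := by
      have h2 := mul_le_mul_of_nonneg_left hmax (by positivity : (0 : ℝ) ≤ 2 * sbar)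
      have h3 := mul_le_mul_of_nonneg_right hconst (sq_nonneg (frobNorm D))
      linarith
    have h4 := mul_le_mul_of_nonneg_right h1 (sq_nonneg (frobNorm E))
    linarith
  have hlow : frobInner W D ≤ 2 * √rbar * specNorm W * frobNorm D := by
    rw [hD, hLhat, hLstar]
    exact frobInner_sub_le_specNorm W _ _ hVo hUho
  have hsp : frobInner W E ≤ 2 * √sbar * maxNorm W * frobNorm E := by
    refine le_of_abs_le (abs_le_of_sq_le_sq ?_ ?_)
    · have h := sq_frobInner_le_of_l0Norm_le W E hEl0
      push_cast at h
      have h1 : 0 ≤ sbar * maxNorm W ^ 2 * frobNorm E ^ 2 := by positivity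
      rw [mul_pow, mul_pow, mul_pow, Real.sq_sqrt (Nat.cast_nonneg _)]
      linarith
    · have := maxNorm_nonneg W
      have := frobNorm_nonneg E
      positivity
  rw [frobNorm_add_sq, frobInner_add_right] at hbasic
  have hcross' := (abs_le.mp hcross).1
  have hrs : (√rbar * specNorm W) ^ 2 = rbar * specNorm W ^ 2 := by
    rw [mul_pow, Real.sq_sqrt (Nat.cast_nonneg _)]
  have hss : (√sbar * maxNorm W) ^ 2 = sbar * maxNorm W ^ 2 := by
    rw [mul_pow, Real.sq_sqrt (Nat.cast_nonneg _)]
  rw [← hrs, ← hss]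
  nlinarith [sq_nonneg (frobNorm D - frobNorm E), sq_nonneg (frobNorm D - 8 * (√rbar * specNorm W)),
    sq_nonneg (frobNorm E - 8 * (√sbar * maxNorm W))]
end

section
/- Let p > r ≥ 2 be integers and μ > 0 with μ r ≤ p/8. Let U, V, L, R ∈ O_{p,r} all be μ-incoherent. Suppose the first rows satisfy Uᵀe₁ = a·e₁ and Lᵀe₁ = b·e₁ for reals a, b with 0 ≤ a ≤ b. Then r − ⟨UᵀL, VᵀR⟩ ≥ (p/(8 μ r))·R_{1,1}²·(a − b)², where R_{1,1} is the (1,1) entry of R and ⟨A,B⟩ = Tr(A Bᵀ) is the Frobenius inner product. -/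
open Matrix
open scoped BigOperators RealInnerProductSpace

theorem frobInner_eq_trace {m n : Type*} [Fintype m] [Fintype n] (A B : Matrix m n ℝ) :
    frobInner A B = (A * Bᵀ).trace := by
  simp [frobInner, Matrix.trace, Matrix.mul_apply]

/-- For matrices with orthonormal columns, `‖U Vᵀ - L Rᵀ‖_F² = 2 (r - ⟨Uᵀ L, Vᵀ R⟩)`. -/
theorem sum_sq_mul_transpose_sub {m n k : Type*} [Fintype m] [Fintype n] [Fintype k]
    [DecidableEq k] (U L : Matrix m k ℝ) (V R : Matrix n k ℝ)
    (hU : Uᵀ * U = 1) (hV : Vᵀ * V = 1) (hL : Lᵀ * L = 1) (hR : Rᵀ * R = 1) :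
    ∑ i, ∑ j, (U * Vᵀ - L * Rᵀ) i j ^ 2 =
      2 * ((Fintype.card k : ℝ) - frobInner (Uᵀ * L) (Vᵀ * R)) := by
  have trace_self : ∀ (X : Matrix m k ℝ) (Y : Matrix n k ℝ), Xᵀ * X = 1 → Yᵀ * Y = 1 →
      ((X * Yᵀ) * (X * Yᵀ)ᵀ).trace = Fintype.card k := by
    intro X Y hX hY
    rw [Matrix.transpose_mul, Matrix.transpose_transpose, Matrix.mul_assoc,
      ← Matrix.mul_assoc Yᵀ, hY, Matrix.one_mul, Matrix.trace_mul_comm, hX, Matrix.trace_one]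
  have trace_cross : ((U * Vᵀ) * (L * Rᵀ)ᵀ).trace = frobInner (Uᵀ * L) (Vᵀ * R) := by
    rw [frobInner_eq_trace, ← Matrix.trace_transpose (Uᵀ * L * _), Matrix.mul_assoc U,
      Matrix.trace_mul_comm U]
    simp only [Matrix.transpose_mul, Matrix.transpose_transpose, Matrix.mul_assoc]
  have trace_cross' : ((L * Rᵀ) * (U * Vᵀ)ᵀ).trace = frobInner (Uᵀ * L) (Vᵀ * R) := by
    rw [← trace_cross, ← Matrix.trace_transpose, Matrix.transpose_mul,
      Matrix.transpose_transpose]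
  have sum_eq : ∑ i, ∑ j, (U * Vᵀ - L * Rᵀ) i j ^ 2 =
      frobInner (U * Vᵀ - L * Rᵀ) (U * Vᵀ - L * Rᵀ) := by
    simp only [frobInner, sq]
  rw [sum_eq, frobInner_eq_trace, Matrix.transpose_sub, Matrix.sub_mul, Matrix.mul_sub,
    Matrix.mul_sub, Matrix.trace_sub, Matrix.trace_sub, Matrix.trace_sub,
    trace_self U V hU hV, trace_self L R hL hR, trace_cross, trace_cross']
  ring

theorem sum_sq_col_eq_one {m k : Type*} [Fintype m] [DecidableEq k] {X : Matrix m k ℝ}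
    (hX : Xᵀ * X = 1) (j : k) : ∑ i, X i j ^ 2 = 1 := by
  simpa [Matrix.mul_apply, sq] using congrFun (congrFun hX j) j

/-- The reverse triangle inequality for multiples of two unit vectors. -/
theorem sq_sub_le_sum_sq_sub {n : Type*} [Fintype n] {v w : n → ℝ} {a b : ℝ}
    (hab : 0 ≤ a * b) (hv : ∑ j, v j ^ 2 = 1) (hw : ∑ j, w j ^ 2 = 1) :
    (a - b) ^ 2 ≤ ∑ j, (a * v j - b * w j) ^ 2 := by
  have expand : ∑ j, (a * v j - b * w j) ^ 2 =
      a * b * ∑ j, (v j - w j) ^ 2 + (a * (a - b)) * ∑ j, v j ^ 2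
        + (b * (b - a)) * ∑ j, w j ^ 2 := by
    simp only [Finset.mul_sum, ← Finset.sum_add_distrib]
    exact Finset.sum_congr rfl fun j _ => by ring
  have : 0 ≤ a * b * ∑ j, (v j - w j) ^ 2 :=
    mul_nonneg hab (Finset.sum_nonneg fun j _ => sq_nonneg _)
  rw [expand, hv, hw]
  linarith

theorem Incoherent.sq_apply_le {p r : ℕ} {μ : ℝ} (hμ : 0 ≤ μ) {X : Matrix (Fin p) (Fin r) ℝ}
    (hX : Incoherent μ X) (i : Fin p) (j : Fin r) : X i j ^ 2 ≤ μ * r / p :=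
  (Finset.single_le_sum (f := fun j => X i j ^ 2) (fun j _ => sq_nonneg _)
    (Finset.mem_univ j)).trans ((Real.sqrt_le_sqrt_iff (by positivity)).1 (hX i))

/-- discrepancy lemma for the norms a, b of the first rows —
r − ⟨UᵀL, VᵀR⟩ ≥ (p/(8μr))·R₁₁²·(a−b)². -/
theorem stmt7 (p r : ℕ) (hr2 : 2 ≤ r) (hrp : r < p)
    (μ : ℝ) (hμ : 0 < μ) (hμr : μ * (r : ℝ) ≤ (p : ℝ) / 8)
    (U V L R : Matrix (Fin p) (Fin r) ℝ)
    (hUo : Uᵀ * U = 1) (hVo : Vᵀ * V = 1) (hLo : Lᵀ * L = 1) (hRo : Rᵀ * R = 1)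
    (hUi : Incoherent μ U) (hVi : Incoherent μ V)
    (hLi : Incoherent μ L) (hRi : Incoherent μ R)
    (a b : ℝ) (ha : 0 ≤ a) (hab : a ≤ b)
    (hUrow : ∀ j : Fin r, U ⟨0, by omega⟩ j = if j = ⟨0, by omega⟩ then a else 0)
    (hLrow : ∀ j : Fin r, L ⟨0, by omega⟩ j = if j = ⟨0, by omega⟩ then b else 0) :
    (r : ℝ) - frobInner (Uᵀ * L) (Vᵀ * R) ≥
      ((p : ℝ) / (8 * μ * (r : ℝ))) *
        (R ⟨0, by omega⟩ (⟨0, by omega⟩ : Fin r)) ^ 2 * (a - b) ^ 2 := by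
  set i₀ : Fin p := ⟨0, by omega⟩
  set j₀ : Fin r := ⟨0, by omega⟩
  have hfrob := sum_sq_mul_transpose_sub U L V R hUo hVo hLo hRo
  rw [Fintype.card_fin] at hfrob
  have hrow : ∀ j, (U * Vᵀ - L * Rᵀ) i₀ j = a * V j j₀ - b * R j j₀ := by
    intro j
    simp [Matrix.mul_apply, hUrow, hLrow]
  have hle : ∑ j, (U * Vᵀ - L * Rᵀ) i₀ j ^ 2 ≤ ∑ i, ∑ j, (U * Vᵀ - L * Rᵀ) i j ^ 2 :=
    Finset.single_le_sum (f := fun i => ∑ j, (U * Vᵀ - L * Rᵀ) i j ^ 2)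
      (fun i _ => Finset.sum_nonneg fun j _ => sq_nonneg _) (Finset.mem_univ i₀)
  simp only [hrow] at hle
  have hsq := sq_sub_le_sum_sq_sub (mul_nonneg ha (ha.trans hab))
    (sum_sq_col_eq_one hVo j₀) (sum_sq_col_eq_one hRo j₀)
  have hr : (0 : ℝ) < r := by exact_mod_cast (by omega : 0 < r)
  have hp : (0 : ℝ) < p := by exact_mod_cast (by omega : 0 < p)
  have hcoef : (p : ℝ) / (8 * μ * r) * R i₀ j₀ ^ 2 ≤ 1 / 8 :=
    calc (p : ℝ) / (8 * μ * r) * R i₀ j₀ ^ 2 ≤ (p : ℝ) / (8 * μ * r) * (μ * r / p) := by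
          gcongr
          exact hRi.sq_apply_le hμ.le i₀ j₀
      _ = 1 / 8 := by field_simp
  have hmul := mul_le_mul_of_nonneg_right hcoef (sq_nonneg (a - b))
  linarith [sq_nonneg (a - b)]
end

section
/- (Linear programming lemma.) Let r ≥ 1 be an integer, let σ₁ ≥ σ₂ ≥ … ≥ σ_r ≥ 0 and λ₁ ≥ λ₂ ≥ … ≥ λ_r ≥ 0 be reals, and define A ∈ ℝ^{r×r} by A_{i,j} = σᵢ·λⱼ. Let γ₁, …, γ_r be reals with 0 ≤ γ_k ≤ 1/3 for all k, set γ₀ = 0, and define the set Ω = { X ∈ ℝ^{r×r} : for every 1 ≤ k ≤ r, Σ_{i=1}^r |X_{i,k}| ≤ 1, Σ_{i=1}^r |X_{k,i}| ≤ 1, and Σ_{i=1}^k Σ_{j=1}^k X_{i,j} ≤ k − γ_k }. Define X₀ ∈ ℝ^{r×r} by X₀(i,i) = 1 − γᵢ − γ_{i−1} for all i, X₀(i,i+1) = X₀(i+1,i) = γᵢ for 1 ≤ i ≤ r−1, and X₀(i,j) = 0 whenever |i−j| ≥ 2. Then X₀ ∈ Ω, and for every X ∈ Ω one has ⟨A,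 X⟩ ≤ ⟨A, X₀⟩, where ⟨A, X⟩ = Σ_{i,j} A_{i,j} X_{i,j}. -/
open Matrix
open scoped BigOperators

/-- γ_{i−1}, with the convention γ₀ = 0. -/
noncomputable def gprev {r : ℕ} (γ : Fin r → ℝ) (i : Fin r) : ℝ :=
  if (i : ℕ) = 0 then 0
  else γ ⟨(i : ℕ) - 1, Nat.lt_of_le_of_lt (Nat.sub_le _ _) i.isLt⟩

/-- The tridiagonal candidate optimum X₀: diagonal entries 1 − γᵢ − γ_{i−1},
super/sub-diagonal entries γᵢ (γ indexed by the smaller of the two indices),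
and 0 whenever |i − j| ≥ 2. -/
noncomputable def X0 {r : ℕ} (γ : Fin r → ℝ) : Matrix (Fin r) (Fin r) ℝ :=
  Matrix.of fun i j =>
    if (i : ℕ) = (j : ℕ) then 1 - γ i - gprev γ i
    else if (j : ℕ) = (i : ℕ) + 1 then γ i
    else if (i : ℕ) = (j : ℕ) + 1 then γ j
    else 0

/-- The feasible set Ω of the linear program. -/
def OmegaLP (r : ℕ) (γ : Fin r → ℝ) : Set (Matrix (Fin r) (Fin r) ℝ) :=
  {X | ∀ k : Fin r,
    (∑ i, |X i k|) ≤ 1 ∧ (∑ i, |X k i|) ≤ 1 ∧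
    (∑ i ∈ Finset.Iic k, ∑ j ∈ Finset.Iic k, X i j) ≤ ((k : ℕ) + 1 : ℝ) - γ k}

/-- A nonincreasing nonnegative sequence is a nonnegative combination of indicators of initial
segments. -/
lemma exists_nonneg_tail_sum : ∀ {r : ℕ} (σ : Fin r → ℝ), Antitone σ → (∀ i, 0 ≤ σ i) →
    ∃ s : Fin r → ℝ, (∀ a, 0 ≤ s a) ∧ ∀ i, σ i = ∑ a, if i ≤ a then s a else 0
  | 0, _, _, _ => ⟨fun _ => 0, fun _ => le_rfl, fun i => i.elim0⟩
  | n + 1, σ, hσ, hσ0 => by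
    obtain ⟨s, hs0, hs⟩ := exists_nonneg_tail_sum
      (fun i : Fin n => σ i.castSucc - σ (Fin.last n))
      (fun i j hij => sub_le_sub_right (hσ (Fin.castSucc_le_castSucc_iff.2 hij)) _)
      (fun i => sub_nonneg.2 (hσ (Fin.le_last _)))
    refine ⟨Fin.snoc s (σ (Fin.last n)), fun a => ?_, fun i => ?_⟩
    · refine Fin.lastCases ?_ (fun a => ?_) a
      · simpa using hσ0 _
      · simpa using hs0 a
    · refine Fin.lastCases ?_ (fun i => ?_) i
      · simp
      · have := hs i
        simp only [Fin.sum_univ_castSucc, Fin.castSucc_le_castSucc_iff, Fin.snoc_castSucc,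
          Fin.snoc_last, Fin.le_last, if_true, ← this]
        ring

/-- The sum of the entries of `X` over the leading rectangle with corner `(a, b)`. -/
noncomputable def leadingSum {r : ℕ} (X : Matrix (Fin r) (Fin r) ℝ) (a b : Fin r) : ℝ :=
  ∑ i ∈ Finset.Iic a, ∑ j ∈ Finset.Iic b, X i j

lemma leadingSum_transpose {r : ℕ} (X : Matrix (Fin r) (Fin r) ℝ) (a b : Fin r) :
    leadingSum Xᵀ a b = leadingSum X b a :=
  Finset.sum_comm

lemma sum_mul_mul_eq_sum_leadingSum {r : ℕ} {σ lam s t : Fin r → ℝ}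
    (hs : ∀ i, σ i = ∑ a, if i ≤ a then s a else 0)
    (ht : ∀ j, lam j = ∑ b, if j ≤ b then t b else 0) (X : Matrix (Fin r) (Fin r) ℝ) :
    ∑ i, ∑ j, σ i * lam j * X i j = ∑ a, ∑ b, s a * t b * leadingSum X a b := by
  have hP : ∀ a b, leadingSum X a b =
      ∑ i, ∑ j, (if i ≤ a then 1 else 0) * (if j ≤ b then 1 else 0) * X i j := by
    intro a b
    have hI : ∀ c : Fin r, Finset.Iic c = Finset.univ.filter (· ≤ c) := by
      intro c; ext; simp
    simp only [leadingSum, hI, Finset.sum_filter]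
    refine Finset.sum_congr rfl fun i _ => ?_
    split_ifs <;> simp
  have hterm : ∀ i j, σ i * lam j * X i j = ∑ a, ∑ b, s a * t b *
      ((if i ≤ a then 1 else 0) * (if j ≤ b then 1 else 0) * X i j) := by
    intro i j
    rw [hs, ht, Finset.sum_mul_sum, Finset.sum_mul]
    refine Finset.sum_congr rfl fun a _ => ?_
    rw [Finset.sum_mul]
    refine Finset.sum_congr rfl fun b _ => ?_
    split_ifs <;> ring
  simp only [hP, hterm, Finset.mul_sum]
  calc _ = ∑ i, ∑ a, ∑ j, ∑ b, s a * t b *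
        ((if i ≤ a then 1 else 0) * (if j ≤ b then 1 else 0) * X i j) :=
        Finset.sum_congr rfl fun i _ => Finset.sum_comm
    _ = ∑ a, ∑ i, ∑ b, ∑ j, s a * t b *
        ((if i ≤ a then 1 else 0) * (if j ≤ b then 1 else 0) * X i j) :=
        Finset.sum_comm.trans <| Finset.sum_congr rfl fun a _ =>
          Finset.sum_congr rfl fun i _ => Finset.sum_comm
    _ = _ := Finset.sum_congr rfl fun a _ => Finset.sum_comm

lemma leadingSum_le_of_row_sum_le {r : ℕ} {X : Matrix (Fin r) (Fin r) ℝ}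
    (hX : ∀ i, ∑ j, |X i j| ≤ 1) (a b : Fin r) : leadingSum X a b ≤ (a : ℕ) + 1 := by
  calc leadingSum X a b ≤ ∑ i ∈ Finset.Iic a, (1 : ℝ) := by
        refine Finset.sum_le_sum fun i _ => le_trans ?_ (hX i)
        exact (Finset.sum_le_sum fun j _ => le_abs_self _).trans
          (Finset.sum_le_sum_of_subset_of_nonneg (Finset.subset_univ _)
            fun _ _ _ => abs_nonneg _)
    _ = _ := by simp

section X0

variable {r : ℕ} (γ : Fin r → ℝ)

lemma X0_transpose : (X0 γ)ᵀ = X0 γ := by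
  ext i j
  simp only [X0, Matrix.transpose_apply, Matrix.of_apply]
  split_ifs with h₁ h₂ <;> first | omega | rfl | skip
  rw [Fin.ext h₁]

lemma X0_nonneg {γ : Fin r → ℝ} (hγ0 : ∀ k, 0 ≤ γ k) (hγ3 : ∀ k, γ k ≤ 1 / 3) (i j : Fin r) :
    0 ≤ X0 γ i j := by
  have hg : gprev γ i ≤ 1 / 3 := by
    unfold gprev
    split_ifs
    · norm_num
    · exact hγ3 _
  have := hγ3 i
  simp only [X0, Matrix.of_apply]
  split_ifs
  · linarith
  · exact hγ0 _
  · exact hγ0 _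
  · exact le_rfl

lemma X0_apply (i j : Fin r) :
    X0 γ i j = (if j = i then 1 - γ i - gprev γ i else 0) +
      (if (j : ℕ) = i + 1 then γ i else 0) + (if (i : ℕ) = j + 1 then gprev γ i else 0) := by
  simp only [X0, Matrix.of_apply, Fin.ext_iff, gprev]
  split_ifs <;> first | omega | simp
  congr 1
  ext
  simp
  omega

lemma sum_Iic_X0 {i b : Fin r} (hib : i ≤ b) :
    ∑ j ∈ Finset.Iic b, X0 γ i j = 1 - if i = b then γ b else 0 := by
  have hdiag : ∑ j ∈ Finset.Iic b, (if j = i then 1 - γ i - gprev γ i else 0)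
      = 1 - γ i - gprev γ i := by
    simp [hib]
  have hsup : ∑ j ∈ Finset.Iic b, (if (j : ℕ) = i + 1 then γ i else 0)
      = γ i - if i = b then γ b else 0 := by
    rcases hib.eq_or_lt with rfl | hlt
    · rw [Finset.sum_eq_zero] <;> simp
      intro j hj hji
      omega
    · rw [Finset.sum_eq_single ⟨(i : ℕ) + 1, by omega⟩]
      · simp [hlt.ne]
      · intro j _ hj
        exact if_neg fun h => hj (Fin.ext h)
      · intro h
        exact absurd (Finset.mem_Iic.2 (Fin.le_def.2 (by simp; omega))) h
  have hsub : ∑ j ∈ Finset.Iic b, (if (i : ℕ) = j + 1 then gprev γ i else 0) = gprev γ i := by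
    by_cases hi : (i : ℕ) = 0
    · simp [gprev, hi]
    · rw [Finset.sum_eq_single ⟨(i : ℕ) - 1, by omega⟩]
      · exact if_pos (by simp; omega)
      · intro j _ hj
        exact if_neg fun h => hj (Fin.ext (by simp; omega))
      · intro h
        exact absurd (Finset.mem_Iic.2 (Fin.le_def.2 (by simp; omega))) h
  simp only [X0_apply, Finset.sum_add_distrib, hdiag, hsup, hsub]
  ring

lemma leadingSum_X0 {a b : Fin r} (hab : a ≤ b) :
    leadingSum (X0 γ) a b = (a : ℕ) + 1 - if a = b then γ b else 0 := by
  have hrow : leadingSum (X0 γ) a b = ∑ i ∈ Finset.Iic a, (1 - if i = b then γ b else 0) :=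
    Finset.sum_congr rfl fun i hi => sum_Iic_X0 γ ((Finset.mem_Iic.1 hi).trans hab)
  rw [hrow, Finset.sum_sub_distrib, Finset.sum_ite_eq']
  simp [hab.ge_iff_eq]

lemma X0_row_sum_le {γ : Fin r → ℝ} (hγ0 : ∀ k, 0 ≤ γ k) (hγ3 : ∀ k, γ k ≤ 1 / 3)
    (k : Fin r) : ∑ j, |X0 γ k j| ≤ 1 := by
  obtain ⟨n, rfl⟩ : ∃ n, r = n + 1 := ⟨r - 1, by have := k.isLt; omega⟩
  have huniv : (Finset.univ : Finset (Fin (n + 1))) = Finset.Iic (Fin.last n) := by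
    ext j
    simp [Fin.le_last]
  simp only [abs_of_nonneg (X0_nonneg hγ0 hγ3 _ _)]
  rw [huniv, sum_Iic_X0 γ (Fin.le_last k)]
  split_ifs
  · linarith [hγ0 (Fin.last n)]
  · simp

lemma X0_mem_OmegaLP {γ : Fin r → ℝ} (hγ0 : ∀ k, 0 ≤ γ k) (hγ3 : ∀ k, γ k ≤ 1 / 3) :
    X0 γ ∈ OmegaLP r γ := by
  refine fun k => ⟨?_, X0_row_sum_le hγ0 hγ3 k, ?_⟩
  · rw [← X0_transpose]
    exact X0_row_sum_le hγ0 hγ3 k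
  · have := leadingSum_X0 γ (le_refl k)
    rw [if_pos rfl] at this
    exact this.le

end X0

lemma leadingSum_le_leadingSum_X0 {r : ℕ} {γ : Fin r → ℝ} {X : Matrix (Fin r) (Fin r) ℝ}
    (hX : X ∈ OmegaLP r γ) (a b : Fin r) : leadingSum X a b ≤ leadingSum (X0 γ) a b := by
  rcases lt_trichotomy a b with hab | rfl | hab
  · rw [leadingSum_X0 γ hab.le, if_neg hab.ne, sub_zero]
    exact leadingSum_le_of_row_sum_le (fun i => (hX i).2.1) a b
  · rw [leadingSum_X0 γ le_rfl, if_pos rfl]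
    exact (hX a).2.2
  · rw [← X0_transpose, leadingSum_transpose, leadingSum_X0 γ hab.le, if_neg hab.ne, sub_zero,
      ← leadingSum_transpose]
    exact leadingSum_le_of_row_sum_le (X := Xᵀ) (fun i => (hX i).1) b a

/-- the linear programming lemma — X₀ is feasible and maximizes
⟨A, X⟩ over Ω, where A_{i,j} = σᵢ λⱼ with nonincreasing nonnegative σ, λ and
0 ≤ γ_k ≤ 1/3. -/
theorem stmt10 (r : ℕ) (hr : 0 < r)
    (σ lam : Fin r → ℝ)
    (hσa : Antitone σ) (hσ0 : ∀ i, 0 ≤ σ i)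
    (hla : Antitone lam) (hl0 : ∀ i, 0 ≤ lam i)
    (γ : Fin r → ℝ) (hγ0 : ∀ k, 0 ≤ γ k) (hγ3 : ∀ k, γ k ≤ 1 / 3)
    (A : Matrix (Fin r) (Fin r) ℝ) (hA : ∀ i j, A i j = σ i * lam j) :
    X0 γ ∈ OmegaLP r γ ∧
      ∀ X ∈ OmegaLP r γ, frobInner A X ≤ frobInner A (X0 γ) := by
  refine ⟨X0_mem_OmegaLP hγ0 hγ3, fun X hX => ?_⟩
  obtain ⟨s, hs0, hs⟩ := exists_nonneg_tail_sum σ hσa hσ0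
  obtain ⟨t, ht0, ht⟩ := exists_nonneg_tail_sum lam hla hl0
  simp only [frobInner, hA, sum_mul_mul_eq_sum_leadingSum hs ht]
  gcongr with a _ b _
  · exact mul_nonneg (hs0 a) (ht0 b)
  · exact leadingSum_le_leadingSum_X0 hX a b
end

section
/- Let p > r ≥ 1 be integers and let U, L ∈ O_{p,r} with first rows Uᵀe₁ = a·e₁ and Lᵀe₁ = b·e₁ for reals a, b with a² < 1. Let s = UᵀL e₁ ∈ ℝʳ (the first column of UᵀL). Then (s₁ − ab)²/(1 − a²) + Σ_{i=2}^{r} sᵢ² ≤ 1 − b²; that is, the first column of UᵀL lies in the ellipsoid ℰ_r = { s ∈ ℝʳ : (s₁ − ab)²/(1−a²) + Σ_{i=2}^r sᵢ² ≤ 1 − b² }. -/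
open Matrix
open scoped BigOperators RealInnerProductSpace

/-- The squared norm of `l - U w - c e_q` is nonnegative; expanded for `U` with orthonormal columns. -/
theorem norm_sq_residual_expansion_nonneg {m n : Type*} [Fintype m] [Fintype n] [DecidableEq m]
    [DecidableEq n] {U : Matrix m n ℝ} (hU : Uᵀ * U = 1) (l : m → ℝ) (w : n → ℝ) (q : m) (c : ℝ) :
    0 ≤ l ⬝ᵥ l + w ⬝ᵥ w + c ^ 2 - 2 * (w ⬝ᵥ (Uᵀ *ᵥ l)) - 2 * (c * l q) +
      2 * (c * (U *ᵥ w) q) := by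
  have hww : (U *ᵥ w) ⬝ᵥ (U *ᵥ w) = w ⬝ᵥ w := by
    rw [dotProduct_mulVec, vecMul_mulVec, hU, vecMul_one]
  have hwl : l ⬝ᵥ (U *ᵥ w) = w ⬝ᵥ (Uᵀ *ᵥ l) := by
    rw [dotProduct_mulVec, mulVec_transpose, dotProduct_comm]
  have hnonneg : 0 ≤ (l - U *ᵥ w - Pi.single q c) ⬝ᵥ (l - U *ᵥ w - Pi.single q c) :=
    Finset.sum_nonneg fun i _ => mul_self_nonneg _
  simp only [sub_dotProduct, dotProduct_sub, dotProduct_single, single_dotProduct,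
    Pi.sub_apply, Pi.single_eq_same, hww, hwl, dotProduct_comm (U *ᵥ w) l] at hnonneg
  linarith

/-- the first column of UᵀL lies in the ellipsoid ℰ_r when the
first rows of U and L are a·e₁ and b·e₁. -/
theorem stmt11 (p r : ℕ) (hr : 0 < r) (hrp : r < p)
    (U L : Matrix (Fin p) (Fin r) ℝ)
    (hUo : Uᵀ * U = 1) (hLo : Lᵀ * L = 1)
    (a b : ℝ) (ha : a ^ 2 < 1)
    (hUrow : ∀ j : Fin r, U ⟨0, hr.trans hrp⟩ j = if j = ⟨0, hr⟩ then a else 0)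
    (hLrow : ∀ j : Fin r, L ⟨0, hr.trans hrp⟩ j = if j = ⟨0, hr⟩ then b else 0) :
    ((Uᵀ * L) ⟨0, hr⟩ ⟨0, hr⟩ - a * b) ^ 2 / (1 - a ^ 2) +
        (∑ i ∈ Finset.univ.erase (⟨0, hr⟩ : Fin r), ((Uᵀ * L) i ⟨0, hr⟩) ^ 2) ≤
      1 - b ^ 2 := by
  set z : Fin r := ⟨0, hr⟩
  set q : Fin p := ⟨0, hr.trans hrp⟩
  set s : Fin r → ℝ := fun i => (Uᵀ * L) i z
  have hpos : 0 < 1 - a ^ 2 := by linarith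
  set k : ℝ := (s z - a * b) / (1 - a ^ 2) with hk
  set w : Fin r → ℝ := Function.update s z k
  have hne : ∀ i ∈ Finset.univ.erase z, w i = s i := fun i hi =>
    Function.update_of_ne (Finset.ne_of_mem_erase hi) _ _
  have hwz : w z = k := Function.update_self _ _ _
  have hll : (L.col z) ⬝ᵥ (L.col z) = 1 := by
    simpa [Matrix.mul_apply, dotProduct] using congrFun (congrFun hLo z) z
  have hUl : Uᵀ *ᵥ L.col z = s := rfl
  have hww : w ⬝ᵥ w = k ^ 2 + ∑ i ∈ Finset.univ.erase z, s i ^ 2 := by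
    rw [dotProduct, ← Finset.add_sum_erase _ _ (Finset.mem_univ z), hwz, sq]
    congr 1
    exact Finset.sum_congr rfl fun i hi => by rw [hne i hi, sq]
  have hws : w ⬝ᵥ s = k * s z + ∑ i ∈ Finset.univ.erase z, s i ^ 2 := by
    rw [dotProduct, ← Finset.add_sum_erase _ _ (Finset.mem_univ z), hwz]
    congr 1
    exact Finset.sum_congr rfl fun i hi => by rw [hne i hi, sq]
  have hlq : L.col z q = b := by simp [hLrow]
  have hUw : (U *ᵥ w) q = a * k := by
    simp [mulVec, dotProduct, hUrow, hwz]
  have hres := norm_sq_residual_expansion_nonneg hUo (L.col z) w q (b - a * k)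
  rw [hll, hUl, hww, hws, hlq, hUw] at hres
  have hsz : s z - a * b = k * (1 - a ^ 2) := by rw [hk]; field_simp
  have hdiv : (s z - a * b) ^ 2 / (1 - a ^ 2) = k ^ 2 * (1 - a ^ 2) := by
    rw [hsz]; field_simp
  change (s z - a * b) ^ 2 / (1 - a ^ 2) + ∑ i ∈ Finset.univ.erase z, s i ^ 2 ≤ 1 - b ^ 2
  rw [hdiv]
  have hks : k * s z = k ^ 2 * (1 - a ^ 2) + k * (a * b) := by linear_combination k * hsz
  nlinarith
end

section
/- For all real numbers a, b, λ with 0 ≤ a ≤ b ≤ 1 and 0 ≤ λ ≤ 1, one has 1 − ( a·b + √( (1−a²)(1−b²) + λ²(1−b²) ) ) / √(1+λ²) ≥ (a − b)²/4. -/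
/-- the elementary real inequality
1 − (ab + √((1−a²)(1−b²) + λ²(1−b²)))/√(1+λ²) ≥ (a−b)²/4
for 0 ≤ a ≤ b ≤ 1 and 0 ≤ λ ≤ 1. -/
theorem stmt12 (a b lam : ℝ) (ha : 0 ≤ a) (hab : a ≤ b) (hb : b ≤ 1)
    (hl0 : 0 ≤ lam) (hl1 : lam ≤ 1) :
    1 - (a * b + Real.sqrt ((1 - a ^ 2) * (1 - b ^ 2) + lam ^ 2 * (1 - b ^ 2))) /
          Real.sqrt (1 + lam ^ 2) ≥
      (a - b) ^ 2 / 4 := by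
  have hs2 : Real.sqrt (1 + lam ^ 2) ^ 2 = 1 + lam ^ 2 := Real.sq_sqrt (by positivity)
  have hs1 : 1 ≤ Real.sqrt (1 + lam ^ 2) := Real.one_le_sqrt.2 (by nlinarith)
  generalize Real.sqrt (1 + lam ^ 2) = s at hs2 hs1 ⊢
  have hs : 0 < s := by linarith
  -- With `c = a / s`, the quotient is `c * b + √((1 - c ^ 2) * (1 - b ^ 2))`.
  obtain ⟨c, rfl⟩ : ∃ c, a = c * s := ⟨a / s, by field_simp⟩
  have hc : 0 ≤ c := nonneg_of_mul_nonneg_left ha hs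
  have hca : c ≤ c * s := le_mul_of_one_le_right hc hs1
  have hb2 : b ^ 2 ≤ 1 := by nlinarith
  have hc2 : c ^ 2 ≤ 1 := by nlinarith
  have hsqrt : Real.sqrt ((1 - (c * s) ^ 2) * (1 - b ^ 2) + lam ^ 2 * (1 - b ^ 2)) ≤
      s * ((2 - c ^ 2 - b ^ 2) / 2) := by
    have hX : (1 - (c * s) ^ 2) * (1 - b ^ 2) + lam ^ 2 * (1 - b ^ 2) =
        s ^ 2 * ((1 - c ^ 2) * (1 - b ^ 2)) := by
      linear_combination (-(1 - b ^ 2)) * hs2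
    rw [hX]
    refine Real.sqrt_le_iff.2 ⟨mul_nonneg hs.le (by linarith), ?_⟩
    rw [mul_pow]
    gcongr
    nlinarith [sq_nonneg (c ^ 2 - b ^ 2)]
  have hquot : (c * s * b +
      Real.sqrt ((1 - (c * s) ^ 2) * (1 - b ^ 2) + lam ^ 2 * (1 - b ^ 2))) / s ≤
      1 - (c - b) ^ 2 / 2 := by
    rw [div_le_iff₀ hs]
    linarith
  have hsq : (c * s - b) ^ 2 ≤ (c - b) ^ 2 := by nlinarith
  nlinarith [sq_nonneg (c - b)]
end

section
/- Let r ≥ 1 be an integer and let a, b be reals with 0 ≤ a < 1 and 0 ≤ b ≤ 1. Suppose s ∈ ℝʳ satisfies (s₁ − ab)²/(1 − a²) + Σ_{i=2}^{r} sᵢ² ≤ 1 − b², and t ∈ ℝʳ satisfies ‖t‖ ≤ 1 (Euclidean norm) and t₁ ≤ 0. Then sᵀt ≤ √(1 − b²). -/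
open scoped BigOperators

/-- if s lies in the ellipsoid
(s₁ − ab)²/(1−a²) + Σ_{i≥2} sᵢ² ≤ 1 − b², t has Euclidean norm at most 1 and
t₁ ≤ 0, then sᵀt ≤ √(1 − b²). -/
theorem stmt13 (r : ℕ) (hr : 0 < r) (a b : ℝ)
    (ha0 : 0 ≤ a) (ha1 : a < 1) (hb0 : 0 ≤ b) (hb1 : b ≤ 1)
    (s t : Fin r → ℝ)
    (hs : (s ⟨0, hr⟩ - a * b) ^ 2 / (1 - a ^ 2) +
            (∑ i ∈ Finset.univ.erase (⟨0, hr⟩ : Fin r), (s i) ^ 2) ≤ 1 - b ^ 2)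
    (ht : Real.sqrt (∑ i, (t i) ^ 2) ≤ 1)
    (ht1 : t ⟨0, hr⟩ ≤ 0) :
    (∑ i, s i * t i) ≤ Real.sqrt (1 - b ^ 2) := by
  set z : Fin r := ⟨0, hr⟩
  have split (f : Fin r → ℝ) : ∑ i, f i = f z + ∑ i ∈ Finset.univ.erase z, f i :=
    (Finset.add_sum_erase _ f (Finset.mem_univ z)).symm
  -- Recentre the ellipsoid at the origin; it then lies in the ball of radius `√(1 - b ^ 2)`.
  let u : Fin r → ℝ := Function.update s z (s z - a * b)
  have u_zero : u z = s z - a * b := Function.update_self ..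
  have u_erase {i : Fin r} (hi : i ∈ Finset.univ.erase z) : u i = s i :=
    Function.update_of_ne (Finset.ne_of_mem_erase hi) ..
  have norm_u : ∑ i, u i ^ 2 ≤ 1 - b ^ 2 := by
    have h : (s z - a * b) ^ 2 ≤ (s z - a * b) ^ 2 / (1 - a ^ 2) :=
      le_div_self (sq_nonneg _) (by nlinarith) (by nlinarith)
    rw [split, u_zero, Finset.sum_congr rfl fun i hi => by rw [u_erase hi]]
    linarith
  calc ∑ i, s i * t i = ∑ i, u i * t i + a * b * t z := by
        rw [split, split fun i => u i * t i, u_zero,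
          Finset.sum_congr rfl fun i hi => by rw [← u_erase hi]]
        ring
    _ ≤ ∑ i, u i * t i := by
        linarith [mul_nonpos_of_nonneg_of_nonpos (mul_nonneg ha0 hb0) ht1]
    _ ≤ √(∑ i, u i ^ 2) * √(∑ i, t i ^ 2) := Real.sum_mul_le_sqrt_mul_sqrt ..
    _ ≤ √(∑ i, u i ^ 2) := mul_le_of_le_one_right (Real.sqrt_nonneg _) ht
    _ ≤ √(1 - b ^ 2) := Real.sqrt_le_sqrt norm_u
end
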